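/- Let S be a finite multiset of elements of K̄ written as a multiset sum S = S₁ + ⋯ + S_N, and let α ∈ K̄ and b ∈ ℚ. Then: (a) 𝔱^S(α,b) ≥ min{𝔱^{S₁}(α,b), …, 𝔱^{S_N}(α,b)}; and (b) this inequality is an equality in each of the following two cases: (i) the minimum on the right-hand side is attained by exactly one index i; (ii) N = 2, every a ∈ S₁ satisfies v(a − α) < b, and there exist α′ ∈ K̄ with v(α′ − α) ≥ b and a rational b′ > b such that every a ∈ S₂ satisfies v(a − α′) ≥ b′. -/

import Mathlib

open Polynomial

/-- The *Gauss valuation* of a polynomial: the minimum of the valuations of its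
coefficients (with value `⊤ = +∞` for the zero polynomial). -/
noncomputable def gaussVal {Kbar : Type*} [Field Kbar]
    (v : AddValuation Kbar (WithTop ℚ)) (h : Kbar[X]) : WithTop ℚ :=
  h.support.inf fun i => v (h.coeff i)

/-- `h = q² + ρ` is a *part-square decomposition* of `h`:
`deg q ≤ ⌈deg h / 2⌉`, encoded as `2 * deg q ≤ deg h + 1` (`q = 0` is allowed). -/
def IsPSD {Kbar : Type*} [Field Kbar] (h q ρ : Kbar[X]) : Prop :=
  h = q ^ 2 + ρ ∧ 2 * q.natDegree ≤ h.natDegree + 1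

/-- A part-square decomposition `h = q² + ρ` is *good* if either `v ρ − v h ≥ 2 v 2`,
or `v ρ − v h < 2 v 2` and no part-square decomposition of `h` has strictly larger
Gauss valuation of its remainder. -/
def IsGoodPSD {Kbar : Type*} [Field Kbar] (v : AddValuation Kbar (WithTop ℚ))
    (h q ρ : Kbar[X]) : Prop :=
  IsPSD h q ρ ∧
    (gaussVal v h + (v 2 + v 2) ≤ gaussVal v ρ ∨
      (gaussVal v ρ < gaussVal v h + (v 2 + v 2) ∧
        ∀ q' ρ' : Kbar[X], IsPSD h q' ρ' → gaussVal v ρ' ≤ gaussVal v ρ))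

/-- The residue field of `v` is algebraically closed, encoded via integral lifts:
every monic polynomial of positive degree with integral coefficients has an integral
root modulo the maximal ideal. -/
def ResidueAlgClosed {Kbar : Type*} [Field Kbar]
    (v : AddValuation Kbar (WithTop ℚ)) : Prop :=
  ∀ p : Kbar[X], p.Monic → 0 < p.natDegree → (∀ i, 0 ≤ v (p.coeff i)) →
    ∃ x : Kbar, 0 ≤ v x ∧ 0 < v (p.eval x)

/-- The monic polynomial `h_S := ∏_{a ∈ S} (z − a)` attached to a finite multiset `S`. -/
noncomputable def rootsPoly {Kbar : Type*} [Field Kbar] (S : Multiset Kbar) : Kbar[X] :=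
  (S.map fun a => X - C a).prod

/-- `TVal v S α b t` expresses that `𝔱^S(α, b) = t`, i.e. (for some, equivalently any,
`β ∈ K̄ˣ` with `v β = b`) that
`t = min (2v(2), sup { v ρ − v (h_S(βz+α)) : h_S(βz+α) = q² + ρ part-square dec. })`;
the subtraction is avoided by adding `v (h_S(βz+α))` throughout and the truncated
supremum is expressed via `IsLUB`. -/
def TVal {Kbar : Type*} [Field Kbar] (v : AddValuation Kbar (WithTop ℚ))
    (S : Multiset Kbar) (α : Kbar) (b t : ℚ) : Prop :=
  ∃ β : Kbar, β ≠ 0 ∧ v β = (b : WithTop ℚ) ∧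
    IsLUB {u : WithTop ℚ |
        ∃ q ρ : Kbar[X], IsPSD ((rootsPoly S).comp (C β * X + C α)) q ρ ∧
          u = min (gaussVal v ((rootsPoly S).comp (C β * X + C α)) + (v 2 + v 2))
                (gaussVal v ρ)}
      (gaussVal v ((rootsPoly S).comp (C β * X + C α)) + (t : WithTop ℚ))

/-!
Call `r ≤ 2 v(2)` a square level of `h` if `h = q² + ρ` with `v(ρ) - v(h) ≥ r` for some `q`, so that
`𝔱` is the supremum of the square levels of `h_S(βz + α)`. Multiplying approximate square roots
shows that a common level of the factors is a level of their product, which gives (a).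

For the equalities, let `r` be a level of `h₁ h₂` and `s ≤ r` a level of both factors, normalised to
Gauss valuation `0`, with remainders `ρ₁` and `ρ₂`. Since the derivative of a square is divisible by
`2`, differentiating the remainder of `h₁ h₂` shows that `v(h₂ ρ₁' + h₁ ρ₂') ≥ (r + s) / 2`. In
case (i) one may take `v(ρ₂) ≥ r`; in case (ii) `h₁` reduces to `1` and `h₂` to `zⁿ`, while
`deg ρ₂' < n`, so the two summands cannot cancel. Either way `v(ρ₁') ≥ (r + s) / 2`, and in case
(ii) also `v(ρ₂') ≥ (r + s) / 2`. The derivative controls the odd part of a remainder, while its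
even part is a square modulo `2`; hence `(r + s) / 2` is again a level. Iterating this midpoint
improvement moves `s` up to `r`.
-/

section ValuedRing

variable {R Γ : Type*} [CommRing R] [LinearOrderedAddCommMonoidWithTop Γ] {w : AddValuation R Γ}

lemma map_natCast_nonneg (w : AddValuation R Γ) (n : ℕ) : 0 ≤ w n := by
  induction n with
  | zero => simp
  | succ n ih => rw [Nat.cast_succ]; exact w.map_le_add ih w.map_one.ge

lemma add_le_map_mul {x y : R} {a b : Γ} (hx : a ≤ w x) (hy : b ≤ w y) : a + b ≤ w (x * y) :=
  (add_le_add hx hy).trans_eq (w.map_mul x y).symm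

lemma le_map_mul_of_nonneg_left {x y : R} {a : Γ} (hx : 0 ≤ w x) (hy : a ≤ w y) :
    a ≤ w (x * y) := by
  simpa only [zero_add] using add_le_map_mul hx hy

lemma le_map_mul_of_nonneg_right {x y : R} {a : Γ} (hx : a ≤ w x) (hy : 0 ≤ w y) :
    a ≤ w (x * y) := by
  simpa only [add_zero] using add_le_map_mul hx hy

lemma map_sq_eq_add (x : R) : w (x ^ 2) = w x + w x := by
  rw [w.map_pow, two_nsmul]

lemma add_add_le_map_mul_sub_mul_sq {h₁ h₂ q₁ q₂ : R} {a b r : Γ} (hr : 0 ≤ r)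
    (hh₁ : a ≤ w h₁) (hh₂ : b ≤ w h₂) (H₁ : a + r ≤ w (h₁ - q₁ ^ 2))
    (H₂ : b + r ≤ w (h₂ - q₂ ^ 2)) : a + b + r ≤ w (h₁ * h₂ - (q₁ * q₂) ^ 2) := by
  have expansion : h₁ * h₂ - (q₁ * q₂) ^ 2 =
      h₁ * (h₂ - q₂ ^ 2) + (h₁ - q₁ ^ 2) * h₂ - (h₁ - q₁ ^ 2) * (h₂ - q₂ ^ 2) := by ring
  rw [expansion]
  refine w.map_le_sub (w.map_le_add ?_ ?_) ?_
  · exact (add_assoc a b r).trans_le (add_le_map_mul hh₁ H₂)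
  · exact (add_right_comm a b r).trans_le (add_le_map_mul H₁ hh₂)
  · calc a + b + r = a + (b + r) := add_assoc a b r
      _ ≤ a + r + (b + r) := by gcongr; exact le_add_of_nonneg_right hr
      _ ≤ _ := add_le_map_mul H₁ H₂

lemma le_map_sum_sq_sub_sum_sq {ι : Type*} {s : Finset ι} {f : ι → R} {a : Γ}
    (hf : ∀ i ∈ s, a ≤ w (f i)) :
    w 2 + (a + a) ≤ w ((∑ i ∈ s, f i) ^ 2 - ∑ i ∈ s, f i ^ 2) := by
  classical
  induction s using Finset.induction_on with
  | empty => simp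
  | insert i s hi ih =>
    have hs : ∀ j ∈ s, a ≤ w (f j) := fun j hj => hf j (Finset.mem_insert_of_mem hj)
    have expansion : (∑ j ∈ insert i s, f j) ^ 2 - ∑ j ∈ insert i s, f j ^ 2 =
        ((∑ j ∈ s, f j) ^ 2 - ∑ j ∈ s, f j ^ 2) + 2 * (f i * ∑ j ∈ s, f j) := by
      rw [Finset.sum_insert hi, Finset.sum_insert hi]; ring
    rw [expansion]
    exact w.map_le_add (ih hs) (add_le_map_mul le_rfl
      (add_le_map_mul (hf i (Finset.mem_insert_self i s)) (w.map_le_sum hs)))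

end ValuedRing

lemma coe_half_le_iff {r : ℚ} {a : WithTop ℚ} : ((r / 2 : ℚ) : WithTop ℚ) ≤ a ↔ r ≤ a + a := by
  cases a with
  | top => simp
  | coe a => norm_cast; constructor <;> intro h <;> linarith

section ApproximateSquareRoots

variable {R : Type*} [CommRing R] {w : AddValuation R (WithTop ℚ)}

lemma map_prod_sub_prod_pos {ι : Type*} {S : Multiset ι} {f g : ι → R}
    (hg : ∀ i ∈ S, 0 ≤ w (g i)) (hfg : ∀ i ∈ S, 0 < w (f i - g i)) :
    0 < w ((S.map f).prod - (S.map g).prod) := by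
  suffices 0 ≤ w (S.map g).prod ∧ 0 < w ((S.map f).prod - (S.map g).prod) from this.2
  induction S using Multiset.induction_on with
  | empty => simp
  | cons i S ih =>
    obtain ⟨hG, hFG⟩ := ih (fun j hj => hg j (Multiset.mem_cons_of_mem hj))
      fun j hj => hfg j (Multiset.mem_cons_of_mem hj)
    have hi := hg i (Multiset.mem_cons_self i S)
    have hfi := hfg i (Multiset.mem_cons_self i S)
    simp only [Multiset.map_cons, Multiset.prod_cons]
    set F := (S.map f).prod
    set G := (S.map g).prod
    have expansion : f i * F - g i * G =
        (f i - g i) * (F - G) + (f i - g i) * G + g i * (F - G) := by ring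
    refine ⟨le_map_mul_of_nonneg_left hi hG, ?_⟩
    rw [expansion]
    refine w.map_lt_add (w.map_lt_add ?_ ?_) ?_
    · exact hfi.trans_le (le_map_mul_of_nonneg_right le_rfl hFG.le)
    · exact hfi.trans_le (le_map_mul_of_nonneg_right le_rfl hG)
    · exact hFG.trans_le (le_map_mul_of_nonneg_left hi le_rfl)

lemma coe_half_le_map_of_le_map_sq {r : ℚ} {x : R} (h : r ≤ w (x ^ 2)) :
    ((r / 2 : ℚ) : WithTop ℚ) ≤ w x :=
  coe_half_le_iff.2 (h.trans_eq (map_sq_eq_add x))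

lemma coe_half_le_map_of_le_map_sub_sq {r : ℚ} {h q : R} (hh : r ≤ w h)
    (H : r ≤ w (h - q ^ 2)) : ((r / 2 : ℚ) : WithTop ℚ) ≤ w q :=
  coe_half_le_map_of_le_map_sq (by simpa only [sub_sub_cancel] using w.map_le_sub hh H)

lemma map_nonneg_of_map_sub_sq_nonneg {h q : R} (hh : 0 ≤ w h) (H : 0 ≤ w (h - q ^ 2)) :
    0 ≤ w q := by
  simpa using coe_half_le_map_of_le_map_sub_sq (r := 0) hh H

lemma coe_half_le_map_sub_of_le_map_sq_sub_sq {s : ℚ} {x y : R}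
    (h2 : ((s / 2 : ℚ) : WithTop ℚ) ≤ w 2) (hy : 0 ≤ w y) (h : s ≤ w (x ^ 2 - y ^ 2)) :
    ((s / 2 : ℚ) : WithTop ℚ) ≤ w (x - y) := by
  have hsq : min (s : WithTop ℚ) ((s / 2 : ℚ) + w (x - y)) ≤ w (x - y) + w (x - y) := by
    have expansion : (x - y) ^ 2 = (x ^ 2 - y ^ 2) - 2 * (y * (x - y)) := by ring
    rw [← map_sq_eq_add, expansion]
    exact w.map_le_sub ((min_le_left _ _).trans h) ((min_le_right _ _).trans
      (add_le_map_mul h2 (le_map_mul_of_nonneg_left hy le_rfl)))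
  generalize w (x - y) = a at hsq ⊢
  cases a with
  | top => exact le_top
  | coe a =>
    norm_cast at hsq ⊢
    rcases min_le_iff.1 hsq with h | h <;> linarith

/- Writing `q₀ = q₁ q₂ + δ`, the error `δ` is small by the previous lemma, and every square
contributes a factor `2` to the derivative of `h₁ h₂ - q₀²`. -/
lemma coe_le_map_mul_derivation_add {A : Type*} [CommSemiring A] [Algebra A R]
    (D : Derivation A R R) (hD : ∀ x, w x ≤ w (D x)) {r s : ℚ} (hs : 0 ≤ s) (hsr : s ≤ r)
    (h2 : ((r / 2 : ℚ) : WithTop ℚ) ≤ w 2) {h₁ h₂ q₀ q₁ q₂ : R} (hh₁ : 0 ≤ w h₁) (hh₂ : 0 ≤ w h₂)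
    (H₀ : r ≤ w (h₁ * h₂ - q₀ ^ 2)) (H₁ : s ≤ w (h₁ - q₁ ^ 2)) (H₂ : s ≤ w (h₂ - q₂ ^ 2)) :
    (((r + s) / 2 : ℚ) : WithTop ℚ) ≤ w (h₂ * D (h₁ - q₁ ^ 2) + h₁ * D (h₂ - q₂ ^ 2)) := by
  have hs' : (0 : WithTop ℚ) ≤ s := by exact_mod_cast hs
  have half_le {x : R} (hx : s ≤ w x) : ((s / 2 : ℚ) : WithTop ℚ) ≤ w x :=
    le_trans (by norm_cast; linarith) hx
  have hq₁ : 0 ≤ w q₁ := map_nonneg_of_map_sub_sq_nonneg hh₁ (hs'.trans H₁)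
  have hq₂ : 0 ≤ w q₂ := map_nonneg_of_map_sub_sq_nonneg hh₂ (hs'.trans H₂)
  have hq : 0 ≤ w (q₁ * q₂) := le_map_mul_of_nonneg_left hq₁ hq₂
  obtain ⟨δ, rfl⟩ : ∃ δ, q₀ = q₁ * q₂ + δ := ⟨q₀ - q₁ * q₂, by ring⟩
  have hδ : ((s / 2 : ℚ) : WithTop ℚ) ≤ w δ := by
    have hprod : (s : WithTop ℚ) ≤ w (h₁ * h₂ - (q₁ * q₂) ^ 2) := by
      simpa using add_add_le_map_mul_sub_mul_sq hs' hh₁ hh₂ (by simpa) (by simpa)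
    have hdiff : (s : WithTop ℚ) ≤ w ((q₁ * q₂ + δ) ^ 2 - (q₁ * q₂) ^ 2) := by
      simpa using w.map_le_sub hprod (le_trans (by exact_mod_cast hsr) H₀)
    simpa using coe_half_le_map_sub_of_le_map_sq_sub_sq
      (le_trans (by norm_cast; linarith) h2) hq hdiff
  have expansion : h₂ * D (h₁ - q₁ ^ 2) + h₁ * D (h₂ - q₂ ^ 2) =
      D (h₁ * h₂ - (q₁ * q₂ + δ) ^ 2) + 2 * (q₁ * q₂ * D δ + δ * D (q₁ * q₂) + δ * D δ
        - q₁ * D q₁ * (h₂ - q₂ ^ 2) - q₂ * D q₂ * (h₁ - q₁ ^ 2)) := by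
    simp only [sq, map_sub, map_add, D.leibniz, smul_eq_mul]
    ring
  rw [expansion]
  refine w.map_le_add ((le_trans (by norm_cast; linarith) H₀).trans (hD _)) ?_
  rw [add_div, WithTop.coe_add]
  refine add_le_map_mul h2 ?_
  refine w.map_le_sub (w.map_le_sub (w.map_le_add (w.map_le_add ?_ ?_) ?_) ?_) ?_
  · exact le_map_mul_of_nonneg_left hq (hδ.trans (hD δ))
  · exact le_map_mul_of_nonneg_right hδ (hq.trans (hD _))
  · have hδ0 : (0 : WithTop ℚ) ≤ w δ := le_trans (by norm_cast; linarith) hδ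
    exact le_map_mul_of_nonneg_right hδ (hδ0.trans (hD δ))
  · exact le_map_mul_of_nonneg_left (le_map_mul_of_nonneg_left hq₁ (hq₁.trans (hD q₁))) (half_le H₂)
  · exact le_map_mul_of_nonneg_left (le_map_mul_of_nonneg_left hq₂ (hq₂.trans (hD q₂))) (half_le H₁)

/-- The rationals `r ≤ 2 w(2)` such that `h` is a square up to an error of relative valuation at
least `r`. For `h = h_S(βz + α)` and `w` the Gauss valuation, `𝔱^S(α, b)` is their supremum: see
`TVal.isLUB_squareLevels`. The degree of the square root `q` is left free, since the high degree
terms of `q` can be removed afterwards. -/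
def squareLevels (w : AddValuation R (WithTop ℚ)) (h : R) : Set ℚ :=
  {r | ((r / 2 : ℚ) : WithTop ℚ) ≤ w 2 ∧ ∃ q, w h + r ≤ w (h - q ^ 2)}

lemma mem_squareLevels_of_nonpos (h : R) {r : ℚ} (hr : r ≤ 0) : r ∈ squareLevels w h := by
  refine ⟨le_trans (by norm_cast; linarith) (map_natCast_nonneg w 2), 0, ?_⟩
  simpa using add_le_add_right (WithTop.coe_le_coe.2 hr) (w h)

lemma isLowerSet_squareLevels (h : R) : IsLowerSet (squareLevels w h) := by
  rintro r s hsr ⟨h2, q, hq⟩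
  exact ⟨le_trans (by norm_cast; linarith) h2, q, le_trans (by gcongr; exact_mod_cast hsr) hq⟩

lemma mul_mem_squareLevels {h₁ h₂ : R} {r : ℚ} (H₁ : r ∈ squareLevels w h₁)
    (H₂ : r ∈ squareLevels w h₂) : r ∈ squareLevels w (h₁ * h₂) := by
  rcases le_total r 0 with hr | hr
  · exact mem_squareLevels_of_nonpos _ hr
  obtain ⟨h2, q₁, hq₁⟩ := H₁
  obtain ⟨-, q₂, hq₂⟩ := H₂
  refine ⟨h2, q₁ * q₂, ?_⟩
  rw [w.map_mul]
  exact add_add_le_map_mul_sub_mul_sq (by exact_mod_cast hr) le_rfl le_rfl hq₁ hq₂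

lemma prod_mem_squareLevels {ι : Type*} {s : Finset ι} {h : ι → R} {r : ℚ}
    (h2 : ((r / 2 : ℚ) : WithTop ℚ) ≤ w 2) (H : ∀ i ∈ s, r ∈ squareLevels w (h i)) :
    r ∈ squareLevels w (∏ i ∈ s, h i) :=
  Finset.prod_induction h (fun h => r ∈ squareLevels w h) (fun _ _ => mul_mem_squareLevels)
    ⟨h2, 1, by simp⟩ H

lemma squareLevels_subset_sq_mul (d h : R) : squareLevels w h ⊆ squareLevels w (d ^ 2 * h) := by
  rintro r ⟨h2, q, hq⟩
  refine ⟨h2, d * q, ?_⟩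
  rw [mul_pow, ← mul_sub, w.map_mul, w.map_mul, add_assoc]
  gcongr

lemma squareLevels_units_sq_mul (d : Rˣ) (h : R) :
    squareLevels w ((d : R) ^ 2 * h) = squareLevels w h := by
  refine (squareLevels_subset_sq_mul (d : R) h).antisymm' ?_
  have cancel : (↑d⁻¹ : R) ^ 2 * ((d : R) ^ 2 * h) = h := by
    rw [← mul_assoc, ← mul_pow, Units.inv_mul, one_pow, one_mul]
  exact (squareLevels_subset_sq_mul (↑d⁻¹ : R) _).trans_eq (congrArg _ cancel)

end ApproximateSquareRoots

lemma le_of_isLUB_of_midpoint_mem {K : Type*} [Field K] [LinearOrder K] [IsStrictOrderedRing K]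
    {L : Set K} {r t : K} (hL : IsLUB L t) (h0 : 0 ∈ L)
    (hmid : ∀ s ∈ L, 0 ≤ s → s ≤ r → (r + s) / 2 ∈ L) : r ≤ t := by
  by_contra! htr
  obtain ⟨s, hsL, hs, -⟩ := hL.exists_between (show t - (r - t) < t by linarith)
  have hmax : max s 0 ∈ L := by rcases max_choice s 0 with h | h <;> rwa [h]
  have hle : max s 0 ≤ r := (hL.1 hmax).trans htr.le
  have hmem := hL.1 (hmid _ hmax (le_max_right s 0) hle)
  linarith [le_max_left s 0]

section GaussValuation

variable {F : Type*} [Field F] {v : AddValuation F (WithTop ℚ)}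

lemma le_gaussVal_iff {p : F[X]} {a : WithTop ℚ} :
    a ≤ gaussVal v p ↔ ∀ i, a ≤ v (p.coeff i) := by
  refine Finset.le_inf_iff.trans ⟨fun h i => ?_, fun h i _ => h i⟩
  by_cases hi : p.coeff i = 0
  · simp [hi]
  · exact h i (mem_support_iff.2 hi)

lemma gaussVal_le_coeff (p : F[X]) (i : ℕ) : gaussVal v p ≤ v (p.coeff i) :=
  le_gaussVal_iff.1 le_rfl i

lemma exists_coeff_eq_gaussVal (v : AddValuation F (WithTop ℚ)) (p : F[X]) :
    ∃ i, v (p.coeff i) = gaussVal v p := by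
  rcases p.support.eq_empty_or_nonempty with hp | hp
  · exact ⟨0, by simp [support_eq_empty.1 hp, gaussVal]⟩
  · obtain ⟨i, -, hi⟩ := p.support.exists_mem_eq_inf hp fun i => v (p.coeff i)
    exact ⟨i, hi.symm⟩

lemma gaussVal_C (c : F) : gaussVal v (C c) = v c := by
  refine le_antisymm ((gaussVal_le_coeff _ 0).trans_eq (by rw [coeff_C_zero])) ?_
  exact le_gaussVal_iff.2 fun i => by rw [coeff_C]; split_ifs <;> simp

lemma gaussVal_X : gaussVal v (X : F[X]) = 0 := by
  refine le_antisymm ((gaussVal_le_coeff _ 1).trans_eq (by simp)) ?_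
  exact le_gaussVal_iff.2 fun i => by rw [coeff_X]; split_ifs <;> simp

lemma le_gaussVal_add (p q : F[X]) :
    min (gaussVal v p) (gaussVal v q) ≤ gaussVal v (p + q) :=
  le_gaussVal_iff.2 fun i => (min_le_min (gaussVal_le_coeff p i) (gaussVal_le_coeff q i)).trans
    (by rw [coeff_add]; exact v.map_add _ _)

lemma exists_least_coeff_eq_gaussVal (v : AddValuation F (WithTop ℚ)) (p : F[X]) :
    ∃ i, v (p.coeff i) = gaussVal v p ∧ ∀ k < i, gaussVal v p < v (p.coeff k) := by
  classical
  have hp := exists_coeff_eq_gaussVal v p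
  exact ⟨Nat.find hp, Nat.find_spec hp, fun k hk =>
    (gaussVal_le_coeff p k).lt_of_ne fun h => Nat.find_min hp hk h.symm⟩

/- If `i` and `j` are the least indices at which the minima for `p` and `q` are attained, then
`pᵢ qⱼ` strictly dominates the coefficient of `X ^ (i + j)` in `p q`. -/
lemma gaussVal_mul (p q : F[X]) : gaussVal v (p * q) = gaussVal v p + gaussVal v q := by
  refine le_antisymm ?_ (le_gaussVal_iff.2 fun k => ?_)
  · rcases eq_or_ne (gaussVal v p) ⊤ with hp | hp
    · simp [hp]
    rcases eq_or_ne (gaussVal v q) ⊤ with hq | hq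
    · simp [hq]
    obtain ⟨i, hi, hi_lt⟩ := exists_least_coeff_eq_gaussVal v p
    obtain ⟨j, hj, hj_lt⟩ := exists_least_coeff_eq_gaussVal v q
    refine (gaussVal_le_coeff _ (i + j)).trans_eq ?_
    rw [coeff_mul, ← Finset.add_sum_erase _ _ (a := (i, j)) (by simp), ← hi, ← hj, ← v.map_mul]
    refine v.map_add_eq_of_lt_left (v.map_lt_sum ?_ ?_)
    · simp [hi, hj, hp, hq]
    rintro ⟨a, c⟩ hac
    obtain ⟨hne, hac⟩ := Finset.mem_erase.1 hac
    rw [Finset.HasAntidiagonal.mem_antidiagonal] at hac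
    rw [v.map_mul, v.map_mul, hi, hj]
    rcases (by grind : a < i ∨ c < j) with ha | hc
    · exact WithTop.add_lt_add_of_lt_of_le hq (hi_lt a ha) (gaussVal_le_coeff q c)
    · exact WithTop.add_lt_add_of_le_of_lt hp (gaussVal_le_coeff p a) (hj_lt c hc)
  · rw [coeff_mul]
    exact v.map_le_sum fun x _ =>
      add_le_map_mul (gaussVal_le_coeff p x.1) (gaussVal_le_coeff q x.2)

/-- The Gauss valuation `gaussVal v` as an additive valuation on `F[X]`. -/
noncomputable def gaussValuation (v : AddValuation F (WithTop ℚ)) :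
    AddValuation F[X] (WithTop ℚ) :=
  AddValuation.of (gaussVal v) (by simp [gaussVal]) (by rw [← C_1, gaussVal_C, v.map_one])
    le_gaussVal_add gaussVal_mul

lemma gaussValuation_apply (p : F[X]) : gaussValuation v p = gaussVal v p := rfl

lemma gaussValuation_C (c : F) : gaussValuation v (C c) = v c := gaussVal_C c

lemma gaussValuation_X : gaussValuation v X = 0 := gaussVal_X

lemma gaussValuation_two : gaussValuation v 2 = v 2 := gaussValuation_C 2

lemma le_gaussValuation_iff {p : F[X]} {a : WithTop ℚ} :
    a ≤ gaussValuation v p ↔ ∀ i, a ≤ v (p.coeff i) := le_gaussVal_iff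

lemma gaussValuation_le_coeff (p : F[X]) (i : ℕ) : gaussValuation v p ≤ v (p.coeff i) :=
  gaussVal_le_coeff p i

lemma gaussValuation_ne_top {p : F[X]} (hp : p ≠ 0) : gaussValuation v p ≠ ⊤ := by
  intro h
  refine hp (leadingCoeff_eq_zero.1 (v.top_iff.1 (top_le_iff.1 ?_)))
  exact h.symm.trans_le (gaussVal_le_coeff p p.natDegree)

lemma gaussValuation_le_derivative (p : F[X]) :
    gaussValuation v p ≤ gaussValuation v (derivative p) := by
  refine le_gaussValuation_iff.2 fun i => ?_
  rw [coeff_derivative, ← Nat.cast_succ]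
  exact le_map_mul_of_nonneg_right (gaussValuation_le_coeff p (i + 1)) (map_natCast_nonneg v _)

lemma gaussValuation_le_comp {p l : F[X]} (hl : 0 ≤ gaussValuation v l) :
    gaussValuation v p ≤ gaussValuation v (p.comp l) := by
  rw [comp_eq_sum_left]
  refine AddValuation.map_le_sum _ fun i _ => le_map_mul_of_nonneg_right ?_ ?_
  · exact (gaussValuation_le_coeff p i).trans_eq (gaussValuation_C _).symm
  · rw [AddValuation.map_pow]
    exact nsmul_nonneg hl i

lemma map_two_mul_add_one (h2 : 0 < v 2) (k : ℕ) : v (2 * k + 1) = 0 := by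
  rw [add_comm, v.map_add_eq_of_lt_left, v.map_one]
  rw [v.map_one]
  exact h2.trans_le (le_map_mul_of_nonneg_right le_rfl (map_natCast_nonneg v k))

lemma gaussValuation_derivative_le_sub_expand_contract (h2 : 0 < v 2) (p : F[X]) :
    gaussValuation v (derivative p) ≤ gaussValuation v (p - expand F 2 (contract 2 p)) := by
  refine le_gaussValuation_iff.2 fun i => ?_
  rw [coeff_sub, coeff_expand two_pos]
  split_ifs with hi
  · rw [coeff_contract two_ne_zero, Nat.div_mul_cancel hi, sub_self, v.map_zero]
    exact le_top
  obtain ⟨k, rfl⟩ : Odd i := by rwa [← Nat.not_even_iff_odd, even_iff_two_dvd]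
  calc gaussValuation v (derivative p) ≤ v ((derivative p).coeff (2 * k)) :=
        gaussValuation_le_coeff _ _
    _ = v (p.coeff (2 * k + 1) - 0) := by
        rw [coeff_derivative, v.map_mul, Nat.cast_mul, Nat.cast_two, map_two_mul_add_one h2,
          add_zero, sub_zero]

lemma exists_sq_near_expand_two (hsq : ∀ x : F, IsSquare x) {p : F[X]} {s : ℚ}
    (hs : s ≤ gaussValuation v p) :
    ∃ g, ((s / 2 : ℚ) : WithTop ℚ) ≤ gaussValuation v g ∧
      v 2 + s ≤ gaussValuation v (expand F 2 p - g ^ 2) := by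
  choose root hroot using hsq
  have hterm (i : ℕ) : ((s / 2 : ℚ) : WithTop ℚ) ≤
      gaussValuation v (C (root (p.coeff i)) * X ^ i) := by
    refine coe_half_le_map_of_le_map_sq ?_
    rw [mul_pow, ← C_pow, sq (root _), ← hroot]
    exact le_map_mul_of_nonneg_right
      ((hs.trans (gaussValuation_le_coeff p i)).trans_eq (gaussValuation_C _).symm)
      (by simp [AddValuation.map_pow, gaussValuation_X])
  refine ⟨∑ i ∈ p.support, C (root (p.coeff i)) * X ^ i,
    AddValuation.map_le_sum _ fun i _ => hterm i, ?_⟩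
  have hexpand : expand F 2 p = ∑ i ∈ p.support, (C (root (p.coeff i)) * X ^ i) ^ 2 := by
    rw [expand_eq_sum, Polynomial.sum]
    refine Finset.sum_congr rfl fun i _ => ?_
    rw [mul_pow, ← C_pow, sq (root _), ← hroot, pow_right_comm]
  rw [hexpand, AddValuation.map_sub_swap]
  have := le_map_sum_sq_sub_sum_sq (w := gaussValuation v) fun i (_ : i ∈ p.support) => hterm i
  rwa [gaussValuation_two, ← WithTop.coe_add, add_halves] at this

/- The odd part of `ρ = h - q²` is bounded by `ρ'`, and its even part is a square `g²` up to a
multiple of `2`, so that `q + g` improves on `q`. -/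
lemma midpoint_mem_squareLevels (hsq : ∀ x : F, IsSquare x) {h q : F[X]} {r s : ℚ} (hs : 0 ≤ s)
    (hsr : s ≤ r) (h2 : ((r / 2 : ℚ) : WithTop ℚ) ≤ v 2) (hh : gaussValuation v h = 0)
    (H : s ≤ gaussValuation v (h - q ^ 2))
    (HD : (((r + s) / 2 : ℚ) : WithTop ℚ) ≤ gaussValuation v (derivative (h - q ^ 2))) :
    (r + s) / 2 ∈ squareLevels (gaussValuation v) h := by
  rcases (hs.trans hsr).eq_or_lt with rfl | hr
  · exact mem_squareLevels_of_nonpos h (by linarith)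
  have hv2 : 0 < v 2 := lt_of_lt_of_le (by norm_cast; linarith) h2
  have hq : 0 ≤ gaussValuation v q :=
    map_nonneg_of_map_sub_sq_nonneg hh.ge (le_trans (by exact_mod_cast hs) H)
  set ρ := h - q ^ 2 with hρ
  have heven : s ≤ gaussValuation v (contract 2 ρ) := le_gaussValuation_iff.2 fun i =>
    (H.trans (gaussValuation_le_coeff ρ (i * 2))).trans_eq (by rw [coeff_contract two_ne_zero])
  obtain ⟨g, hg, hE⟩ := exists_sq_near_expand_two hsq heven
  refine ⟨le_trans (by norm_cast; linarith) (h2.trans_eq gaussValuation_two.symm), q + g, ?_⟩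
  have expansion : h - (q + g) ^ 2 =
      (ρ - expand F 2 (contract 2 ρ)) + (expand F 2 (contract 2 ρ) - g ^ 2) - 2 * (q * g) := by
    rw [hρ]; ring
  rw [hh, zero_add, expansion]
  refine AddValuation.map_le_sub _ (AddValuation.map_le_add _ ?_ ?_) ?_
  · exact HD.trans (gaussValuation_derivative_le_sub_expand_contract hv2 ρ)
  · calc (((r + s) / 2 : ℚ) : WithTop ℚ) ≤ (r / 2 : ℚ) + s := by norm_cast; linarith
      _ ≤ v 2 + s := by gcongr
      _ ≤ _ := hE
  · rw [add_div, WithTop.coe_add]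
    exact add_le_map_mul (h2.trans_eq gaussValuation_two.symm) (le_map_mul_of_nonneg_left hq hg)

lemma squareLevels_C_mul (hsq : ∀ x : F, IsSquare x) {c : F} (hc : c ≠ 0) (h : F[X]) :
    squareLevels (gaussValuation v) (C c * h) = squareLevels (gaussValuation v) h := by
  obtain ⟨d, rfl⟩ := hsq c
  have hd : d ≠ 0 := fun hd => hc (by rw [hd, mul_zero])
  rw [← sq, C_pow]
  exact squareLevels_units_sq_mul (Units.map C.toMonoidHom (Units.mk0 d hd)) h

lemma exists_gaussValuation_C_mul_eq_zero (v : AddValuation F (WithTop ℚ)) {h : F[X]}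
    (hh : h ≠ 0) : ∃ c ≠ 0, gaussValuation v (C c * h) = 0 := by
  obtain ⟨i, hi⟩ := exists_coeff_eq_gaussVal v h
  have hne : h.coeff i ≠ 0 := fun h0 =>
    gaussValuation_ne_top hh (hi.symm.trans (v.top_iff.2 h0))
  refine ⟨(h.coeff i)⁻¹, inv_ne_zero hne, ?_⟩
  rw [AddValuation.map_mul, gaussValuation_C, gaussValuation_apply, ← hi, ← v.map_mul,
    inv_mul_cancel₀ hne, v.map_one]

/- In the bound of `coe_le_map_mul_derivation_add` on `h₂ ρ₁' + h₁ ρ₂'`, the term `ρ₂` is itself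
small, hence so is `ρ₁'`. -/
lemma midpoint_mem_squareLevels_of_mul (hsq : ∀ x : F, IsSquare x) {h₁ h₂ : F[X]} (hh₁ : h₁ ≠ 0)
    (hh₂ : h₂ ≠ 0) {r s : ℚ} (hs : 0 ≤ s) (hsr : s ≤ r)
    (Hmul : r ∈ squareLevels (gaussValuation v) (h₁ * h₂))
    (H₁ : s ∈ squareLevels (gaussValuation v) h₁) (H₂ : r ∈ squareLevels (gaussValuation v) h₂) :
    (r + s) / 2 ∈ squareLevels (gaussValuation v) h₁ := by
  obtain ⟨c₁, hc₁, hw₁⟩ := exists_gaussValuation_C_mul_eq_zero v hh₁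
  obtain ⟨c₂, hc₂, hw₂⟩ := exists_gaussValuation_C_mul_eq_zero v hh₂
  rw [← squareLevels_C_mul hsq (mul_ne_zero hc₁ hc₂), C_mul, mul_mul_mul_comm] at Hmul
  rw [← squareLevels_C_mul hsq hc₁] at H₁ ⊢
  rw [← squareLevels_C_mul hsq hc₂] at H₂
  obtain ⟨h2, q₀, hq₀⟩ := Hmul
  obtain ⟨-, q₁, hq₁⟩ := H₁
  obtain ⟨-, q₂, hq₂⟩ := H₂
  rw [AddValuation.map_mul, hw₁, hw₂, zero_add, zero_add] at hq₀
  rw [hw₁, zero_add] at hq₁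
  rw [hw₂, zero_add] at hq₂
  refine midpoint_mem_squareLevels hsq hs hsr (h2.trans_eq gaussValuation_two) hw₁ hq₁ ?_
  have hcore := coe_le_map_mul_derivation_add derivative' gaussValuation_le_derivative hs hsr h2
    hw₁.ge hw₂.ge hq₀ hq₁ (le_trans (by exact_mod_cast hsr) hq₂)
  have hρ₂ : (((r + s) / 2 : ℚ) : WithTop ℚ) ≤
      gaussValuation v (C c₁ * h₁ * derivative (C c₂ * h₂ - q₂ ^ 2)) :=
    le_map_mul_of_nonneg_left hw₁.ge
      ((le_trans (by norm_cast; linarith) hq₂).trans (gaussValuation_le_derivative _))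
  have hρ₁ := AddValuation.map_le_sub _ hcore hρ₂
  rwa [derivative'_apply, derivative'_apply, add_sub_cancel_right, AddValuation.map_mul, hw₂,
    zero_add] at hρ₁

lemma add_le_gaussValuation_sub_eraseLead_sq {h q : F[X]} {a r : ℚ} (hr : 0 ≤ r)
    (h2 : ((r / 2 : ℚ) : WithTop ℚ) ≤ v 2) (hh : a ≤ gaussValuation v h)
    (H : (a + r : ℚ) ≤ gaussValuation v (h - q ^ 2)) (hdeg : h.natDegree < 2 * q.natDegree) :
    (a + r : ℚ) ≤ gaussValuation v (h - q.eraseLead ^ 2) := by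
  set m := monomial q.natDegree q.leadingCoeff with hm
  have hq : ((a / 2 : ℚ) : WithTop ℚ) ≤ gaussValuation v q :=
    coe_half_le_map_of_le_map_sub_sq hh (le_trans (by norm_cast; linarith) H)
  have hmq : (((a + r) / 2 : ℚ) : WithTop ℚ) ≤ gaussValuation v m := by
    have hlead : ((a + r : ℚ) : WithTop ℚ) ≤ v (q.leadingCoeff ^ 2) := by
      have := H.trans (gaussValuation_le_coeff _ (2 * q.natDegree))
      rwa [coeff_sub, coeff_eq_zero_of_natDegree_lt hdeg, zero_sub, v.map_neg,
        coeff_pow_mul_natDegree] at this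
    rw [hm, ← C_mul_X_pow_eq_monomial, AddValuation.map_mul, AddValuation.map_pow,
      gaussValuation_X, nsmul_zero, add_zero, gaussValuation_C]
    exact coe_half_le_map_of_le_map_sq hlead
  have expansion : h - q.eraseLead ^ 2 = (h - q ^ 2) + 2 * (q * m) - m * m := by
    rw [← self_sub_monomial_natDegree_leadingCoeff, ← hm]; ring
  rw [expansion]
  refine AddValuation.map_le_sub _ (AddValuation.map_le_add _ H ?_) ?_
  · have : (a + r : ℚ) = r / 2 + (a / 2 + (a + r) / 2) := by ring
    rw [this, WithTop.coe_add, WithTop.coe_add]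
    exact add_le_map_mul (h2.trans_eq gaussValuation_two.symm) (add_le_map_mul hq hmq)
  · rw [← add_halves (a + r), WithTop.coe_add]
    exact add_le_map_mul hmq hmq

lemma exists_natDegree_le_of_mem_squareLevels {h : F[X]} {r : ℚ}
    (H : r ∈ squareLevels (gaussValuation v) h) :
    ∃ q : F[X], 2 * q.natDegree ≤ h.natDegree ∧
      gaussValuation v h + r ≤ gaussValuation v (h - q ^ 2) := by
  rcases lt_or_ge r 0 with hr | hr
  · exact ⟨0, by simp, by simpa using add_le_add_right (WithTop.coe_le_coe.2 hr.le) _⟩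
  rcases eq_or_ne h 0 with rfl | hh
  · exact ⟨0, by simp⟩
  obtain ⟨a, ha⟩ := WithTop.ne_top_iff_exists.1 (gaussValuation_ne_top (v := v) hh)
  obtain ⟨h2, q, hq⟩ := H
  rw [← ha, ← WithTop.coe_add] at hq ⊢
  induction hn : q.support.card using Nat.strong_induction_on generalizing q with
  | _ n ih =>
    rcases le_or_gt (2 * q.natDegree) h.natDegree with hdeg | hdeg
    · exact ⟨q, hdeg, hq⟩
    have hq0 : q ≠ 0 := fun h0 => by simp [h0] at hdeg
    exact ih _ (hn ▸ eraseLead_support_card_lt hq0) q.eraseLead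
      (add_le_gaussValuation_sub_eraseLead_sq hr (h2.trans_eq gaussValuation_two) ha.le hq hdeg) rfl

lemma gaussValuation_X_pow_mul_add_le {A B : F[X]} {n : ℕ} (hB : B.degree < n) :
    gaussValuation v (X ^ n * A + B) ≤ min (gaussValuation v A) (gaussValuation v B) := by
  have hB0 := degree_lt_iff_coeff_zero _ _ |>.1 hB
  refine le_min (le_gaussValuation_iff.2 fun i => ?_) (le_gaussValuation_iff.2 fun i => ?_)
  · refine (gaussValuation_le_coeff _ (i + n)).trans_eq ?_
    rw [coeff_add, coeff_X_pow_mul, hB0 _ (Nat.le_add_left n i), add_zero]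
  · rcases lt_or_ge i n with hi | hi
    · refine (gaussValuation_le_coeff _ i).trans_eq ?_
      rw [coeff_add, coeff_X_pow_mul', if_neg hi.not_ge, zero_add]
    · rw [hB0 i hi, v.map_zero]
      exact le_top

lemma gaussValuation_mul_add_mul_le {P Q A B : F[X]} {n : ℕ} (hP : 0 < gaussValuation v (P - 1))
    (hQ : 0 < gaussValuation v (Q - X ^ n)) (hB : B.degree < n) :
    gaussValuation v (Q * A + P * B) ≤ min (gaussValuation v A) (gaussValuation v B) := by
  set m := min (gaussValuation v A) (gaussValuation v B)
  by_contra! hlt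
  have lt_map_sub_mul {x y z : F[X]} (hxy : 0 < gaussValuation v (x - y))
      (hz : m ≤ gaussValuation v z) : m < gaussValuation v ((y - x) * z) := by
    rw [AddValuation.map_mul, AddValuation.map_sub_swap, ← zero_add m]
    exact WithTop.add_lt_add_of_lt_of_le hlt.ne_top hxy hz
  have expansion : X ^ n * A + B = Q * A + P * B + (X ^ n - Q) * A + (1 - P) * B := by ring
  refine (gaussValuation_X_pow_mul_add_le (v := v) (A := A) hB).not_gt ?_
  rw [expansion]
  exact AddValuation.map_lt_add _ (AddValuation.map_lt_add _ hlt
    (lt_map_sub_mul hQ (min_le_left _ _))) (lt_map_sub_mul hP (min_le_right _ _))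

lemma degree_derivative_lt_of_natDegree_le {R : Type*} [Semiring R] {p : R[X]} {n : ℕ}
    (hp : p.natDegree ≤ n) : (derivative p).degree < n := by
  refine (degree_lt_iff_coeff_zero _ _).2 fun i hi => ?_
  rw [coeff_derivative, coeff_eq_zero_of_natDegree_lt (by omega), zero_mul]

/- Since `P` is close to `1` and `Q` to `X ^ n`, while `ρ₂'` has degree less than `n`, there is no
cancellation in `Q ρ₁' + P ρ₂'`. -/
lemma midpoint_mem_squareLevels_inter (hsq : ∀ x : F, IsSquare x) {P Q : F[X]} {n : ℕ}
    (hP : 0 < gaussValuation v (P - 1)) (hQ : 0 < gaussValuation v (Q - X ^ n))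
    (hQn : Q.natDegree ≤ n) {r s : ℚ} (hs : 0 ≤ s) (hsr : s ≤ r)
    (Hmul : r ∈ squareLevels (gaussValuation v) (P * Q))
    (H : s ∈ squareLevels (gaussValuation v) P ∩ squareLevels (gaussValuation v) Q) :
    (r + s) / 2 ∈ squareLevels (gaussValuation v) P ∩ squareLevels (gaussValuation v) Q := by
  have hX : gaussValuation v (X ^ n) = 0 := by
    rw [AddValuation.map_pow, gaussValuation_X, nsmul_zero]
  have hwP : gaussValuation v P = 0 := by
    rw [AddValuation.map_eq_of_lt_sub _ ((AddValuation.map_one _).trans_lt hP),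
      AddValuation.map_one]
  have hwQ : gaussValuation v Q = 0 := by
    rw [AddValuation.map_eq_of_lt_sub _ (hX.trans_lt hQ), hX]
  obtain ⟨h2, q₀, hq₀⟩ := Hmul
  obtain ⟨⟨-, q₁, hq₁⟩, H₂⟩ := H
  obtain ⟨q₂, hdeg, hq₂⟩ := exists_natDegree_le_of_mem_squareLevels H₂
  rw [AddValuation.map_mul, hwP, hwQ, zero_add, zero_add] at hq₀
  rw [hwP, zero_add] at hq₁
  rw [hwQ, zero_add] at hq₂
  have hdegρ₂ : (Q - q₂ ^ 2).natDegree ≤ n :=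
    (natDegree_sub_le_iff_left (natDegree_pow_le.trans (hdeg.trans hQn))).2 hQn
  have hρ₂ : (derivative (Q - q₂ ^ 2)).degree < n := degree_derivative_lt_of_natDegree_le hdegρ₂
  have hcore := coe_le_map_mul_derivation_add derivative' gaussValuation_le_derivative hs hsr h2
    hwP.ge hwQ.ge hq₀ hq₁ hq₂
  rw [derivative'_apply, derivative'_apply] at hcore
  obtain ⟨hρ₁', hρ₂'⟩ := le_min_iff.1 (hcore.trans (gaussValuation_mul_add_mul_le hP hQ hρ₂))
  rw [gaussValuation_two] at h2
  exact ⟨midpoint_mem_squareLevels hsq hs hsr h2 hwP hq₁ hρ₁',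
    midpoint_mem_squareLevels hsq hs hsr h2 hwQ hq₂ hρ₂'⟩

lemma squareLevels_comp_subset {l m : F[X]} (hl : 0 ≤ gaussValuation v l)
    (hm : 0 ≤ gaussValuation v m) (hlm : l.comp m = X) (h : F[X]) :
    squareLevels (gaussValuation v) (h.comp l) ⊆ squareLevels (gaussValuation v) h := by
  rintro r ⟨h2, q, hq⟩
  refine ⟨h2, q.comp m, ?_⟩
  have hcomp : h - q.comp m ^ 2 = (h.comp l - q ^ 2).comp m := by
    rw [sub_comp, comp_assoc, hlm, comp_X, pow_comp]
  rw [hcomp]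
  exact (add_le_add_left (gaussValuation_le_comp hl) _).trans (hq.trans (gaussValuation_le_comp hm))

end GaussValuation

section RescaledRootsPoly

variable {F : Type*} [Field F] {v : AddValuation F (WithTop ℚ)}

/-- The polynomial `h_S(βz + α)`, whose approximate squareness in the Gauss valuation is what
`𝔱^S(α, v β)` measures. -/
noncomputable def rescaledRootsPoly (S : Multiset F) (α β : F) : F[X] :=
  (rootsPoly S).comp (C β * X + C α)

lemma rescaledRootsPoly_eq_prod (S : Multiset F) (α β : F) :
    rescaledRootsPoly S α β = (S.map fun a => C β * X + C (α - a)).prod := by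
  simp only [rescaledRootsPoly, rootsPoly, multiset_prod_comp, Multiset.map_map,
    Function.comp_apply, sub_comp, X_comp, C_comp, C_sub, add_sub_assoc]

lemma rescaledRootsPoly_add (S₁ S₂ : Multiset F) (α β : F) :
    rescaledRootsPoly (S₁ + S₂) α β = rescaledRootsPoly S₁ α β * rescaledRootsPoly S₂ α β := by
  simp only [rescaledRootsPoly_eq_prod, Multiset.map_add, Multiset.prod_add]

lemma rescaledRootsPoly_sum {ι : Type*} (s : Finset ι) (S : ι → Multiset F) (α β : F) :
    rescaledRootsPoly (∑ i ∈ s, S i) α β = ∏ i ∈ s, rescaledRootsPoly (S i) α β := by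
  classical
  induction s using Finset.induction_on with
  | empty => simp [rescaledRootsPoly_eq_prod]
  | insert i s hi ih => rw [Finset.sum_insert hi, Finset.prod_insert hi, rescaledRootsPoly_add, ih]

lemma rescaledRootsPoly_ne_zero (S : Multiset F) (α : F) {β : F} (hβ : β ≠ 0) :
    rescaledRootsPoly S α β ≠ 0 := by
  rw [rescaledRootsPoly_eq_prod]
  refine Multiset.prod_ne_zero fun h => ?_
  obtain ⟨a, -, ha⟩ := Multiset.mem_map.1 h
  simpa [hβ] using congrArg (coeff · 1) ha

lemma map_div_nonneg_of_le {x y : F} (hy : y ≠ 0) (h : v y ≤ v x) : 0 ≤ v (x / y) := by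
  refine (WithTop.add_le_add_iff_right (v.ne_top_iff.2 hy)).1 ?_
  rwa [zero_add, ← v.map_mul, div_mul_cancel₀ x hy]

lemma map_div_pos_of_lt {x y : F} (h : v y < v x) : 0 < v (x / y) := by
  have hy : y ≠ 0 := v.ne_top_iff.1 h.ne_top
  refine (WithTop.add_lt_add_iff_right (v.ne_top_iff.2 hy)).1 ?_
  rwa [zero_add, ← v.map_mul, div_mul_cancel₀ x hy]

lemma gaussValuation_C_mul_X_add_C_nonneg {a c : F} (ha : 0 ≤ v a) (hc : 0 ≤ v c) :
    0 ≤ gaussValuation v (C a * X + C c) := by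
  refine AddValuation.map_le_add _ ?_ (hc.trans_eq (gaussValuation_C c).symm)
  exact le_map_mul_of_nonneg_left (ha.trans_eq (gaussValuation_C a).symm) gaussValuation_X.ge

lemma squareLevels_rescaledRootsPoly_subset (S : Multiset F) {α α' β β' : F} (hβ : β ≠ 0)
    (hβ' : β' ≠ 0) (hvβ : v β' = v β) (hα : v β ≤ v (α' - α)) :
    squareLevels (gaussValuation v) (rescaledRootsPoly S α' β') ⊆
      squareLevels (gaussValuation v) (rescaledRootsPoly S α β) := by
  have comp_affine (x y x' y' : F) : (C x * X + C y).comp (C x' * X + C y') =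
      C (x * x') * X + C (x * y' + y) := by
    simp only [add_comp, mul_comp, C_comp, X_comp, C_add, C_mul]
    ring
  have hcomp : rescaledRootsPoly S α' β' =
      (rescaledRootsPoly S α β).comp (C (β' / β) * X + C ((α' - α) / β)) := by
    rw [rescaledRootsPoly, rescaledRootsPoly, comp_assoc, comp_affine, mul_div_cancel₀ _ hβ,
      mul_div_cancel₀ _ hβ, sub_add_cancel]
  rw [hcomp]
  refine squareLevels_comp_subset (m := C (β / β') * X + C ((α - α') / β'))
    (gaussValuation_C_mul_X_add_C_nonneg (map_div_nonneg_of_le hβ hvβ.ge)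
      (map_div_nonneg_of_le hβ hα))
    (gaussValuation_C_mul_X_add_C_nonneg (map_div_nonneg_of_le hβ' hvβ.le)
      (map_div_nonneg_of_le hβ' (by rwa [hvβ, v.map_sub_swap]))) ?_ _
  have hslope : β' / β * (β / β') = 1 := by field_simp
  have hconst : β' / β * ((α - α') / β') + (α' - α) / β = 0 := by field_simp; ring
  rw [comp_affine, hslope, hconst, C_1, C_0, one_mul, add_zero]

lemma squareLevels_rescaledRootsPoly_eq (S : Multiset F) {α α' β β' : F} (hβ : β ≠ 0)
    (hβ' : β' ≠ 0) (hvβ : v β' = v β) (hα : v β ≤ v (α' - α)) :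
    squareLevels (gaussValuation v) (rescaledRootsPoly S α' β') =
      squareLevels (gaussValuation v) (rescaledRootsPoly S α β) :=
  (squareLevels_rescaledRootsPoly_subset S hβ hβ' hvβ hα).antisymm
    (squareLevels_rescaledRootsPoly_subset S hβ' hβ hvβ.symm
      (by rwa [hvβ, v.map_sub_swap]))

lemma exists_rescaledRootsPoly_eq_C_mul_near_one {S : Multiset F} {α β : F}
    (hS : ∀ a ∈ S, v (α - a) < v β) :
    ∃ c ≠ 0, ∃ P, rescaledRootsPoly S α β = C c * P ∧ 0 < gaussValuation v (P - 1) := by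
  have hne : ∀ a ∈ S, α - a ≠ 0 := fun a ha => v.ne_top_iff.1 (hS a ha).ne_top
  refine ⟨(S.map fun a => α - a).prod, ?_, (S.map fun a => C (β / (α - a)) * X + 1).prod, ?_, ?_⟩
  · refine Multiset.prod_ne_zero fun h => ?_
    obtain ⟨a, ha, h0⟩ := Multiset.mem_map.1 h
    exact hne a ha h0
  · rw [rescaledRootsPoly_eq_prod, map_multiset_prod, Multiset.map_map, ← Multiset.prod_map_mul]
    refine congrArg _ (Multiset.map_congr rfl fun a ha => ?_)
    simp only [Function.comp_apply, mul_add, ← mul_assoc, ← C_mul, mul_div_cancel₀ _ (hne a ha),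
      mul_one]
  · have hpos : 0 < gaussValuation v
        ((S.map fun a => C (β / (α - a)) * X + 1).prod - (S.map fun _ => 1).prod) :=
      map_prod_sub_prod_pos (fun _ _ => (AddValuation.map_one _).ge) fun a ha => by
        rw [add_sub_cancel_right, AddValuation.map_mul, gaussValuation_C, gaussValuation_X,
          add_zero]
        exact map_div_pos_of_lt (hS a ha)
    rwa [Multiset.prod_map_one] at hpos

lemma exists_rescaledRootsPoly_eq_C_mul_near_X_pow {S : Multiset F} {α β : F} (hβ : β ≠ 0)
    (hS : ∀ a ∈ S, v β < v (α - a)) :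
    ∃ c ≠ 0, ∃ Q, rescaledRootsPoly S α β = C c * Q ∧ Q.natDegree ≤ S.card ∧
      0 < gaussValuation v (Q - X ^ S.card) := by
  refine ⟨β ^ S.card, pow_ne_zero _ hβ, (S.map fun a => X + C ((α - a) / β)).prod, ?_, ?_, ?_⟩
  · have hconst : C (β ^ S.card) = (S.map fun _ => C β).prod := by simp
    rw [rescaledRootsPoly_eq_prod, hconst, ← Multiset.prod_map_mul]
    simp only [mul_add, ← C_mul, mul_div_cancel₀ _ hβ]
  · refine (natDegree_multiset_prod_le _).trans ?_
    simp
  · have hpos : 0 < gaussValuation v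
        ((S.map fun a => X + C ((α - a) / β)).prod - (S.map fun _ => X).prod) :=
      map_prod_sub_prod_pos (fun _ _ => gaussValuation_X.ge) fun a ha => by
        rw [add_sub_cancel_left, gaussValuation_C]
        exact map_div_pos_of_lt (hS a ha)
    rwa [Multiset.map_const', Multiset.prod_replicate] at hpos

end RescaledRootsPoly

section SupremumOfSquareLevels

lemma isLUB_inter_of_isLowerSet {α : Type*} [LinearOrder α] {s t : Set α} {a b : α}
    (hs : IsLowerSet s) (ht : IsLowerSet t) (ha : IsLUB s a) (hb : IsLUB t b) :
    IsLUB (s ∩ t) (min a b) := by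
  rcases hs.total ht with h | h
  · rwa [Set.inter_eq_left.2 h, min_eq_left (ha.mono hb h)]
  · rwa [Set.inter_eq_right.2 h, min_eq_right (hb.mono ha h)]

variable {R : Type*} [CommRing R] {w : AddValuation R (WithTop ℚ)}

lemma mem_squareLevels_of_lt {h : R} {r t : ℚ} (hL : IsLUB (squareLevels w h) t) (hr : r < t) :
    r ∈ squareLevels w h := by
  obtain ⟨s, hs, hrs⟩ := (lt_isLUB_iff hL).1 hr
  exact isLowerSet_squareLevels h hrs.le hs

lemma le_of_isLUB_squareLevels_prod {ι : Type*} {s : Finset ι} (hs : s.Nonempty) {h : ι → R}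
    {a t : ℚ} {τ : ι → ℚ} (hL : IsLUB (squareLevels w (∏ i ∈ s, h i)) t)
    (hτ : ∀ i ∈ s, IsLUB (squareLevels w (h i)) (τ i)) (ha : ∀ i ∈ s, a ≤ τ i) : a ≤ t := by
  refine le_of_forall_lt_imp_le_of_dense fun r hr => hL.1 ?_
  have hmem : ∀ i ∈ s, r ∈ squareLevels w (h i) := fun i hi =>
    mem_squareLevels_of_lt (hτ i hi) (hr.trans_le (ha i hi))
  obtain ⟨i, hi⟩ := hs
  exact prod_mem_squareLevels (hmem i hi).1 hmem

variable {F : Type*} [Field F] {v : AddValuation F (WithTop ℚ)}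

lemma le_of_isLUB_squareLevels_prod_of_lt (hsq : ∀ x : F, IsSquare x) {ι : Type*} [DecidableEq ι]
    {s : Finset ι} {i₀ : ι} (hi₀ : i₀ ∈ s) {h : ι → F[X]} (hh : ∀ i ∈ s, h i ≠ 0) {t : ℚ}
    {τ : ι → ℚ} (hL : IsLUB (squareLevels (gaussValuation v) (∏ i ∈ s, h i)) t)
    (hτ : ∀ i ∈ s, IsLUB (squareLevels (gaussValuation v) (h i)) (τ i))
    (hlt : ∀ i ∈ s.erase i₀, τ i₀ < τ i) : t ≤ τ i₀ := by
  by_contra! ht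
  obtain ⟨r, hτr, hrt, hr⟩ : ∃ r, τ i₀ < r ∧ r < t ∧ ∀ i ∈ s.erase i₀, r < τ i := by
    have hbelow : ∀ x ∈ ({τ i₀} : Finset ℚ), ∀ y ∈ insert t ((s.erase i₀).image τ), x < y := by
      simp only [Finset.forall_mem_insert, Finset.forall_mem_image, Finset.mem_singleton,
        forall_eq]
      exact ⟨ht, hlt⟩
    simpa only [Finset.forall_mem_insert, Finset.forall_mem_image, Finset.mem_singleton,
      forall_eq] using Order.exists_between_finsets _ _ hbelow
  have hmul := mem_squareLevels_of_lt hL hrt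
  rw [← Finset.mul_prod_erase s h hi₀] at hmul
  have herase : r ∈ squareLevels (gaussValuation v) (∏ i ∈ s.erase i₀, h i) :=
    prod_mem_squareLevels hmul.1 fun i hi =>
      mem_squareLevels_of_lt (hτ i (Finset.mem_of_mem_erase hi)) (hr i hi)
  refine hτr.not_ge (le_of_isLUB_of_midpoint_mem (hτ i₀ hi₀)
    (mem_squareLevels_of_nonpos _ le_rfl) fun u hu hu0 hur => ?_)
  exact midpoint_mem_squareLevels_of_mul hsq (hh i₀ hi₀)
    (Finset.prod_ne_zero_iff.2 fun i hi => hh i (Finset.mem_of_mem_erase hi)) hu0 hur hmul hu herase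

lemma eq_min_of_isLUB_squareLevels_mul (hsq : ∀ x : F, IsSquare x) {P Q : F[X]} {n : ℕ}
    (hP : 0 < gaussValuation v (P - 1)) (hQ : 0 < gaussValuation v (Q - X ^ n))
    (hQn : Q.natDegree ≤ n) {t t₁ t₂ : ℚ}
    (hL : IsLUB (squareLevels (gaussValuation v) (P * Q)) t)
    (hL₁ : IsLUB (squareLevels (gaussValuation v) P) t₁)
    (hL₂ : IsLUB (squareLevels (gaussValuation v) Q) t₂) : t = min t₁ t₂ := by
  have hmin := isLUB_inter_of_isLowerSet (isLowerSet_squareLevels P) (isLowerSet_squareLevels Q)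
    hL₁ hL₂
  refine le_antisymm (hL.2 fun r hr => ?_) (hmin.mono hL fun r hr => mul_mem_squareLevels hr.1 hr.2)
  exact le_of_isLUB_of_midpoint_mem hmin
    ⟨mem_squareLevels_of_nonpos P le_rfl, mem_squareLevels_of_nonpos Q le_rfl⟩
    fun s hs hs0 hsr => midpoint_mem_squareLevels_inter hsq hP hQ hQn hs0 hsr hr hs

end SupremumOfSquareLevels

section TVal

variable {F : Type*} [Field F] {v : AddValuation F (WithTop ℚ)}

lemma isLUB_squareLevels_of_isLUB_isPSD {h : F[X]} (hh : h ≠ 0) {t : ℚ}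
    (hL : IsLUB {u : WithTop ℚ | ∃ q ρ : F[X], IsPSD h q ρ ∧
      u = min (gaussVal v h + (v 2 + v 2)) (gaussVal v ρ)} (gaussVal v h + t)) :
    IsLUB (squareLevels (gaussValuation v) h) t := by
  obtain ⟨a, ha⟩ := WithTop.ne_top_iff_exists.1 (gaussValuation_ne_top (v := v) hh)
  rw [gaussValuation_apply] at ha
  simp only [← ha] at hL
  constructor
  · intro r hr
    obtain ⟨q, hdeg, hq⟩ := exists_natDegree_le_of_mem_squareLevels hr
    have hle := hL.1 ⟨q, h - q ^ 2, ⟨by ring, hdeg.trans (Nat.le_succ _)⟩, rfl⟩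
    have hmin : (a + r : WithTop ℚ) ≤ min (a + (v 2 + v 2)) (gaussVal v (h - q ^ 2)) :=
      le_min (by gcongr; exact coe_half_le_iff.1 (hr.1.trans_eq gaussValuation_two))
        (by rwa [gaussValuation_apply, ← ha] at hq)
    exact_mod_cast (WithTop.add_le_add_iff_left WithTop.coe_ne_top).1 (hmin.trans hle)
  · intro M hM
    by_contra! hMt
    obtain ⟨u, ⟨q, ρ, ⟨hqρ, -⟩, hu⟩, hMu, hut⟩ :=
      hL.exists_between (WithTop.add_lt_add_left WithTop.coe_ne_top (WithTop.coe_lt_coe.2 hMt))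
    obtain ⟨r, rfl⟩ : ∃ r : ℚ, u = a + r := by
      lift u to ℚ using ne_top_of_le_ne_top (WithTop.coe_ne_top (a := a + t)) hut
      exact ⟨u - a, by norm_cast; ring⟩
    have hr : r ∈ squareLevels (gaussValuation v) h := by
      obtain ⟨h2, hρ⟩ := le_min_iff.1 hu.le
      refine ⟨coe_half_le_iff.2 ?_, q, ?_⟩
      · rw [gaussValuation_two]
        exact (WithTop.add_le_add_iff_left WithTop.coe_ne_top).1 h2
      · rwa [gaussValuation_apply, gaussValuation_apply, ← ha, hqρ, add_sub_cancel_left]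
    have hMr : M < r := by
      exact_mod_cast (WithTop.add_lt_add_iff_left WithTop.coe_ne_top).1 hMu
    exact (hM hr).not_gt hMr

lemma TVal.isLUB_squareLevels {S : Multiset F} {α α' β : F} {b t : ℚ} (hT : TVal v S α b t)
    (hβ : β ≠ 0) (hvβ : v β = b) (hα : b ≤ v (α' - α)) :
    IsLUB (squareLevels (gaussValuation v) (rescaledRootsPoly S α' β)) t := by
  obtain ⟨β₀, hβ₀, hvβ₀, hL⟩ := hT
  rw [squareLevels_rescaledRootsPoly_eq S hβ₀ hβ (hvβ.trans hvβ₀.symm) (hvβ₀.trans_le hα)]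
  exact isLUB_squareLevels_of_isLUB_isPSD (rescaledRootsPoly_ne_zero S α hβ₀) hL

lemma TVal.isLUB_squareLevels_self {S : Multiset F} {α β : F} {b t : ℚ} (hT : TVal v S α b t)
    (hβ : β ≠ 0) (hvβ : v β = b) :
    IsLUB (squareLevels (gaussValuation v) (rescaledRootsPoly S α β)) t :=
  hT.isLUB_squareLevels hβ hvβ (by simp)

theorem TVal.le_of_sum {ι : Type*} {s : Finset ι} (hs : s.Nonempty) {S : ι → Multiset F} {α : F}
    {a b t : ℚ} {τ : ι → ℚ} (hT : TVal v (∑ i ∈ s, S i) α b t)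
    (hτ : ∀ i ∈ s, TVal v (S i) α b (τ i)) (ha : ∀ i ∈ s, a ≤ τ i) : a ≤ t := by
  obtain ⟨β, hβ, hvβ, -⟩ := id hT
  have hL := hT.isLUB_squareLevels_self hβ hvβ
  rw [rescaledRootsPoly_sum] at hL
  exact le_of_isLUB_squareLevels_prod hs hL
    (fun i hi => (hτ i hi).isLUB_squareLevels_self hβ hvβ) ha

theorem TVal.eq_of_sum_of_lt (hsq : ∀ x : F, IsSquare x) {ι : Type*} [DecidableEq ι]
    {s : Finset ι} {i₀ : ι} (hi₀ : i₀ ∈ s) {S : ι → Multiset F} {α : F} {b t : ℚ} {τ : ι → ℚ}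
    (hT : TVal v (∑ i ∈ s, S i) α b t) (hτ : ∀ i ∈ s, TVal v (S i) α b (τ i))
    (hlt : ∀ i ∈ s.erase i₀, τ i₀ < τ i) : t = τ i₀ := by
  obtain ⟨β, hβ, hvβ, -⟩ := id hT
  have hL := hT.isLUB_squareLevels_self hβ hvβ
  rw [rescaledRootsPoly_sum] at hL
  refine le_antisymm ?_ (hT.le_of_sum ⟨i₀, hi₀⟩ hτ fun i hi => ?_)
  · exact le_of_isLUB_squareLevels_prod_of_lt hsq hi₀
      (fun i _ => rescaledRootsPoly_ne_zero (S i) α hβ) hL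
      (fun i hi => (hτ i hi).isLUB_squareLevels_self hβ hvβ) hlt
  · rcases eq_or_ne i i₀ with rfl | hne
    · exact le_rfl
    · exact (hlt i (Finset.mem_erase.2 ⟨hne, hi⟩)).le

theorem TVal.eq_min_of_add (hsq : ∀ x : F, IsSquare x) {S₁ S₂ : Multiset F} {α α' : F}
    {b t t₁ t₂ : ℚ} (hT : TVal v (S₁ + S₂) α b t) (hT₁ : TVal v S₁ α b t₁)
    (hT₂ : TVal v S₂ α b t₂) (hS₁ : ∀ a ∈ S₁, v (a - α) < b) (hα : b ≤ v (α' - α))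
    (hS₂ : ∀ a ∈ S₂, b < v (a - α')) : t = min t₁ t₂ := by
  obtain ⟨β, hβ, hvβ, -⟩ := id hT
  have houter : ∀ a ∈ S₁, v (α' - a) < v β := fun a ha => by
    rw [hvβ, v.map_sub_swap, ← sub_sub_sub_cancel_right a α' α,
      v.map_sub_eq_of_lt_left ((hS₁ a ha).trans_le hα)]
    exact hS₁ a ha
  have hinner : ∀ a ∈ S₂, v β < v (α' - a) := fun a ha => by
    rw [hvβ, v.map_sub_swap]
    exact hS₂ a ha
  obtain ⟨c₁, hc₁, P, hP, hP1⟩ := exists_rescaledRootsPoly_eq_C_mul_near_one houter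
  obtain ⟨c₂, hc₂, Q, hQ, hQn, hQX⟩ := exists_rescaledRootsPoly_eq_C_mul_near_X_pow hβ hinner
  have hL := hT.isLUB_squareLevels hβ hvβ hα
  have hL₁ := hT₁.isLUB_squareLevels hβ hvβ hα
  have hL₂ := hT₂.isLUB_squareLevels hβ hvβ hα
  rw [rescaledRootsPoly_add, hP, hQ, mul_mul_mul_comm, ← C_mul,
    squareLevels_C_mul hsq (mul_ne_zero hc₁ hc₂)] at hL
  rw [hP, squareLevels_C_mul hsq hc₁] at hL₁
  rw [hQ, squareLevels_C_mul hsq hc₂] at hL₂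
  exact eq_min_of_isLUB_squareLevels_mul hsq hP1 hQX hQn hL hL₁ hL₂

end TVal

theorem stmt10_general {F : Type*} [Field F] (hsq : ∀ x : F, IsSquare x)
    (v : AddValuation F (WithTop ℚ)) (α : F) (b : ℚ) :
    (∀ N : ℕ, 0 < N → ∀ Ss : Fin N → Multiset F, ∀ t : ℚ, ∀ ts : Fin N → ℚ,
      TVal v (∑ i, Ss i) α b t → (∀ i, TVal v (Ss i) α b (ts i)) →
      (∃ i, ts i ≤ t) ∧
        ∀ i₀ : Fin N, (∀ i, i ≠ i₀ → ts i₀ < ts i) → t = ts i₀) ∧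
    (∀ S₁ S₂ : Multiset F, ∀ t t₁ t₂ : ℚ,
      TVal v (S₁ + S₂) α b t → TVal v S₁ α b t₁ → TVal v S₂ α b t₂ →
      (∀ a ∈ S₁, v (a - α) < (b : WithTop ℚ)) →
      (∃ α' : F, (b : WithTop ℚ) ≤ v (α' - α) ∧
        ∃ b' : ℚ, b < b' ∧ ∀ a ∈ S₂, (b' : WithTop ℚ) ≤ v (a - α')) →
      t = min t₁ t₂) := by
  refine ⟨fun N hN Ss t ts hT hTs => ⟨?_, fun i₀ hi₀ => ?_⟩, ?_⟩
  · have : Nonempty (Fin N) := ⟨⟨0, hN⟩⟩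
    obtain ⟨i, hi⟩ := Finite.exists_min ts
    exact ⟨i, hT.le_of_sum Finset.univ_nonempty (fun j _ => hTs j) fun j _ => hi j⟩
  · exact hT.eq_of_sum_of_lt hsq (Finset.mem_univ i₀) (fun i _ => hTs i)
      fun i hi => hi₀ i (Finset.ne_of_mem_erase hi)
  · rintro S₁ S₂ t t₁ t₂ hT hT₁ hT₂ hS₁ ⟨α', hα, b', hb, hS₂⟩
    exact hT.eq_min_of_add hsq hT₁ hT₂ hS₁ hα fun a ha =>
      (WithTop.coe_lt_coe.2 hb).trans_le (hS₂ a ha)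

/-- Splitting a multiset `S = S₁ + ⋯ + S_N`:
(a) `𝔱^S(α,b) ≥ min 𝔱^{Sᵢ}(α,b)`;
(b) equality holds (i) when the minimum is attained at a unique index, and
(ii) when `N = 2`, every `a ∈ S₁` has `v (a − α) < b`, and `S₂` is contained in a
strictly smaller disc `D_{α',b'} ⊆ D_{α,b}` with `b' > b`. -/
theorem stmt10 {Kbar : Type*} [Field Kbar] [IsAlgClosed Kbar]
    (v : AddValuation Kbar (WithTop ℚ)) (hchar : (2 : Kbar) ≠ 0)
    (hres : ResidueAlgClosed v)
    (hsurj : ∀ b : ℚ, ∃ β : Kbar, β ≠ 0 ∧ v β = (b : WithTop ℚ))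
    (α : Kbar) (b : ℚ) :
    (∀ N : ℕ, 0 < N → ∀ Ss : Fin N → Multiset Kbar, ∀ t : ℚ, ∀ ts : Fin N → ℚ,
      TVal v (∑ i, Ss i) α b t → (∀ i, TVal v (Ss i) α b (ts i)) →
      (∃ i, ts i ≤ t) ∧
        ∀ i₀ : Fin N, (∀ i, i ≠ i₀ → ts i₀ < ts i) → t = ts i₀) ∧
    (∀ S₁ S₂ : Multiset Kbar, ∀ t t₁ t₂ : ℚ,
      TVal v (S₁ + S₂) α b t → TVal v S₁ α b t₁ → TVal v S₂ α b t₂ →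
      (∀ a ∈ S₁, v (a - α) < (b : WithTop ℚ)) →
      (∃ α' : Kbar, (b : WithTop ℚ) ≤ v (α' - α) ∧
        ∃ b' : ℚ, b < b' ∧ ∀ a ∈ S₂, (b' : WithTop ℚ) ≤ v (a - α')) →
      t = min t₁ t₂) := by
  exact stmt10_general IsAlgClosed.exists_eq_mul_self v α b
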